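/- arXiv:2010.03227 — 3 statements merged into one kernel-verified Lean document; each statement's English description precedes it below -/
import Mathlib

section
/- There is an indexable family of languages that is Ex-learnable from text but is not Ex-learnable from informant by any iterative learner. Concretely, identifying ℕ with ℕ×ℕ via a fixed computable pairing bijection, the family 𝓛 = { L_{S,D} : S, D finite subsets of ℕ } with L_{S,D} = S × (D ∪ {0}) ∪ (ℕ\S) × (ℕ\{0}) is an indexable family lying in [TxtEx] but not in [ItInfEx]. -/
/-- `W p` is the domain of the `p`-th partial computable function
(the `W`-hypothesis space for an acceptable numbering). -/
def W (p : ℕ) : Set ℕ := {n | ((Denumerable.ofNat Nat.Partrec.Code p).eval n).Dom}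

/-- A labeled datum: a natural number together with a Boolean label. -/
abbrev Datum := ℕ × Bool

/-- The initial segment `I[t]` of an informant `I`, of length `t`. -/
def seg (I : ℕ → Datum) (t : ℕ) : List Datum := (List.range t).map I

/-- The positively labeled numbers occurring in a finite sequence. -/
def posOf (σ : List Datum) : Set ℕ := {x | (x, true) ∈ σ}

/-- The negatively labeled numbers occurring in a finite sequence. -/
def negOf (σ : List Datum) : Set ℕ := {x | (x, false) ∈ σ}

/-- A finite sequence over ℕ × Bool is consistently labeled. -/
def ConsistentSeq (σ : List Datum) : Prop :=
  ∀ x b b', (x, b) ∈ σ → (x, b') ∈ σ → b = b'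

/-- `I` is an informant for the language `L`. -/
def IsInformant (L : Set ℕ) (I : ℕ → Datum) : Prop :=
  (∀ t, ((I t).2 = true ↔ (I t).1 ∈ L)) ∧ Function.Surjective (fun t => (I t).1)

/-- `M` Ex-learns `L` from the particular informant `I`. -/
def ExLearnsFrom (M : List Datum →. ℕ) (L : Set ℕ) (I : ℕ → Datum) : Prop :=
  ∃ t₀ e, W e = L ∧ ∀ t, t₀ ≤ t → M (seg I t) = Part.some e

/-- `M` Ex-learns `L` from informant. -/
def ExLearns (M : List Datum →. ℕ) (L : Set ℕ) : Prop :=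
  ∀ I, IsInformant L I → ExLearnsFrom M L I

/-- `M` is an iterative learner: its value on `σ⌢x` is computed from its
value on `σ` and the datum `x` alone. -/
def Iterative (M : List Datum →. ℕ) : Prop :=
  ∃ h : ℕ × Datum →. ℕ, Partrec h ∧
    ∀ σ x, M (σ ++ [x]) = (M σ).bind (fun e => h (e, x))

/-- `𝓛 ∈ [ItInfEx]`: some iterative partial computable learner
Ex-learns every member of `𝓛` from informant. -/
def ItInfEx (𝓛 : Set (Set ℕ)) : Prop :=
  ∃ M : List Datum →. ℕ, Partrec M ∧ Iterative M ∧ ∀ L ∈ 𝓛, ExLearns M L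

/-- The initial segment `T[t]` of a text `T`, of length `t` (`none` is the pause symbol `#`). -/
def textSeg (T : ℕ → Option ℕ) (t : ℕ) : List (Option ℕ) := (List.range t).map T

/-- `T` is a text for the language `L`. -/
def IsText (L : Set ℕ) (T : ℕ → Option ℕ) : Prop :=
  ∀ n, n ∈ L ↔ ∃ t, T t = some n

/-- `M` Ex-learns `L` from text. -/
def TxtExLearns (M : List (Option ℕ) →. ℕ) (L : Set ℕ) : Prop :=
  ∀ T, IsText L T → ∃ t₀ e, W e = L ∧ ∀ t, t₀ ≤ t → M (textSeg T t) = Part.some e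

/-- `𝓛 ∈ [TxtEx]`: some partial computable learner Ex-learns every member of `𝓛` from text. -/
def TxtEx (𝓛 : Set (Set ℕ)) : Prop :=
  ∃ M : List (Option ℕ) →. ℕ, Partrec M ∧ ∀ L ∈ 𝓛, TxtExLearns M L

/-- `𝓛` is an indexable family. -/
def IndexableFamily (𝓛 : Set (Set ℕ)) : Prop :=
  ∃ f : ℕ → ℕ → Bool, Computable₂ f ∧ 𝓛 = Set.range (fun i => {n | f i n = true})

/-- The language `L_{S,D} = S × (D ∪ {0}) ∪ (ℕ\S) × (ℕ\{0})`, where ℕ is identified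
with ℕ × ℕ via the computable pairing bijection `Nat.pair`/`Nat.unpair`. -/
def L_SD (S D : Finset ℕ) : Set ℕ :=
  {m | ((Nat.unpair m).1 ∈ S ∧ ((Nat.unpair m).2 ∈ D ∨ (Nat.unpair m).2 = 0)) ∨
       ((Nat.unpair m).1 ∉ S ∧ (Nat.unpair m).2 ≠ 0)}

/-!
From text, the family is learned in the limit: `S` is the set of rows whose `0`-th entry has been
seen, and `D` is the set of columns that have been seen in one of these rows.

From informant, an iterative learner that has converged on `L_{∅,∅}` ignores all further data for
that language, in particular a positive datum `(a, d)` with `d ≠ 0` and `a` a fresh row. If the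
data that follow make it converge on `L_{{a},∅}`, it does so whether or not `(a, d)` came before,
although in the former case the target may be `L_{{a},{d}}`, and no datum other than `(a, d)` tells
these two languages apart.
-/

open Filter
open scoped symmDiff

section Indexing

variable {α : Type*} [Primcodable α] {L : α → Set ℕ}

theorem indexableFamily_range [Inhabited α] (hL : ComputablePred fun q : α × ℕ => q.2 ∈ L q.1) :
    IndexableFamily (Set.range L) := by
  obtain ⟨χ, hχ, hLχ⟩ := ComputablePred.computable_iff.1 hL
  have hL_eq : ∀ a, {n | χ (a, n) = true} = L a := fun a =>
    Set.ext fun n => (congrFun hLχ (a, n)).to_iff.symm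
  let index : ℕ → α := fun i => (Encodable.decode i).getD default
  have hindex : Computable index :=
    Computable.option_getD Computable.decode (Computable.const default)
  have index_surjective : index.Surjective := fun a => ⟨Encodable.encode a, by simp [index]⟩
  refine ⟨fun i n => χ (index i, n),
    hχ.comp ((hindex.comp Computable.fst).pair Computable.snd), ?_⟩
  simp only [hL_eq]
  exact (index_surjective.range_comp L).symm

theorem exists_computable_W_eq (hL : REPred fun q : α × ℕ => q.2 ∈ L q.1) :
    ∃ g : α → ℕ, Computable g ∧ ∀ a, W (g a) = L a := by
  obtain ⟨c, hc⟩ := Nat.Partrec.Code.exists_code.1 hL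
  refine ⟨fun a => Encodable.encode (c.curry (Encodable.encode a)),
    (Primrec.encode.comp (Nat.Partrec.Code.primrec₂_curry.comp (Primrec.const c)
      Primrec.encode)).to_comp, fun a => ?_⟩
  ext n
  simp [W, hc, Nat.Partrec.Code.eval_curry, Part.assert]

theorem txtEx_of_eventually_eq (hL : REPred fun q : α × ℕ => q.2 ∈ L q.1)
    {guess : List (Option ℕ) → α} (hguess : Computable guess) {𝓛 : Set (Set ℕ)}
    (hlim : ∀ K ∈ 𝓛, ∀ T, IsText K T → ∃ a, L a = K ∧ ∀ᶠ t in atTop, guess (textSeg T t) = a) :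
    TxtEx 𝓛 := by
  obtain ⟨g, hg, hW⟩ := exists_computable_W_eq hL
  refine ⟨fun σ => Part.some (g (guess σ)), (hg.comp hguess).partrec, fun K hK T hT => ?_⟩
  obtain ⟨a, haK, ha⟩ := hlim K hK T hT
  obtain ⟨t₀, ht₀⟩ := eventually_atTop.1 ha
  exact ⟨t₀, g a, (hW a).trans haK, fun t ht => by simp only [ht₀ t ht]⟩

end Indexing

section Family

theorem pair_mem_L_SD {S D : Finset ℕ} {a b : ℕ} :
    Nat.pair a b ∈ L_SD S D ↔ a ∈ S ∧ (b ∈ D ∨ b = 0) ∨ a ∉ S ∧ b ≠ 0 := by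
  simp [L_SD]

theorem pair_zero_mem_L_SD {S D : Finset ℕ} {a : ℕ} : Nat.pair a 0 ∈ L_SD S D ↔ a ∈ S := by
  simp [pair_mem_L_SD]

theorem primrecRel_mem_list {α : Type*} [Primcodable α] :
    PrimrecRel fun (l : List α) (a : α) => a ∈ l :=
  (PrimrecRel.exists_mem_list (R := fun x a : α => x = a) Primrec.eq).of_eq (by simp)

theorem primrecPred_mem_L_SD : PrimrecPred fun q : (List ℕ × List ℕ) × ℕ =>
    q.2 ∈ L_SD q.1.1.toFinset q.1.2.toFinset := by
  have row : Primrec fun q : (List ℕ × List ℕ) × ℕ => q.2.unpair.1 :=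
    Primrec.fst.comp (Primrec.unpair.comp Primrec.snd)
  have column : Primrec fun q : (List ℕ × List ℕ) × ℕ => q.2.unpair.2 :=
    Primrec.snd.comp (Primrec.unpair.comp Primrec.snd)
  have row_mem : PrimrecPred fun q : (List ℕ × List ℕ) × ℕ => q.2.unpair.1 ∈ q.1.1 :=
    primrecRel_mem_list.comp (Primrec.fst.comp Primrec.fst) row
  have column_mem : PrimrecPred fun q : (List ℕ × List ℕ) × ℕ => q.2.unpair.2 ∈ q.1.2 :=
    primrecRel_mem_list.comp (Primrec.snd.comp Primrec.fst) column
  have column_zero : PrimrecPred fun q : (List ℕ × List ℕ) × ℕ => q.2.unpair.2 = 0 :=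
    Primrec.eq.comp column (Primrec.const 0)
  exact ((row_mem.and (column_mem.or column_zero)).or (row_mem.not.and column_zero.not)).of_eq
    fun q => by simp [L_SD]

theorem setOf_L_SD_eq_range : {L | ∃ S D : Finset ℕ, L = L_SD S D} =
    Set.range fun p : List ℕ × List ℕ => L_SD p.1.toFinset p.2.toFinset := by
  ext L
  constructor
  · rintro ⟨S, D, rfl⟩
    exact ⟨(S.toList, D.toList), by simp⟩
  · rintro ⟨p, rfl⟩
    exact ⟨_, _, rfl⟩

/-- `D` is not determined by `L_SD S D`, as `0 ∈ D` is irrelevant, and so is all of `D` if `S = ∅`;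
the set of columns met by the rows in `S` is. -/
theorem exists_L_SD_eq_and_mem_iff (S D : Finset ℕ) : ∃ D' : Finset ℕ,
    L_SD S D' = L_SD S D ∧ ∀ b, b ∈ D' ↔ ∃ a ∈ S, Nat.pair a b ∈ L_SD S D := by
  refine ⟨(insert 0 D).filter fun _ => S.Nonempty, ?_, ?_⟩
  · ext m
    have hne : m.unpair.1 ∈ S → S.Nonempty := fun h => ⟨_, h⟩
    simp only [L_SD, Set.mem_ofPred_eq, Finset.mem_filter, Finset.mem_insert]
    tauto
  · intro b
    simp only [Finset.mem_filter, Finset.mem_insert, pair_mem_L_SD]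
    constructor
    · rintro ⟨hb, a, ha⟩
      exact ⟨a, ha, Or.inl ⟨ha, hb.symm⟩⟩
    · rintro ⟨a, ha, h⟩
      exact ⟨by tauto, a, ha⟩

theorem indexableFamily_L_SD : IndexableFamily {L | ∃ S D : Finset ℕ, L = L_SD S D} := by
  rw [setOf_L_SD_eq_range]
  exact indexableFamily_range primrecPred_mem_L_SD.computablePred

end Family

section Text

theorem mem_textSeg {T : ℕ → Option ℕ} {t : ℕ} {x : Option ℕ} :
    x ∈ textSeg T t ↔ ∃ s < t, T s = x := by
  simp [textSeg]

theorem length_textSeg (T : ℕ → Option ℕ) (t : ℕ) : (textSeg T t).length = t := by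
  simp [textSeg]

theorem IsText.mem_of_mem_textSeg {L : Set ℕ} {T : ℕ → Option ℕ} (hT : IsText L T) {n t : ℕ}
    (h : some n ∈ textSeg T t) : n ∈ L := by
  obtain ⟨s, -, hs⟩ := mem_textSeg.1 h
  exact (hT n).2 ⟨s, hs⟩

theorem IsText.eventually_mem_textSeg {L : Set ℕ} {T : ℕ → Option ℕ} (hT : IsText L T) {n : ℕ}
    (hn : n ∈ L) : ∀ᶠ t in atTop, some n ∈ textSeg T t := by
  obtain ⟨s, hs⟩ := (hT n).1 hn
  filter_upwards [eventually_gt_atTop s] with t ht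
  exact mem_textSeg.2 ⟨s, ht, hs⟩

theorem eventually_filter_range_eq_sort {p : ℕ → ℕ → Bool} {S : Finset ℕ}
    (sound : ∀ t a, p t a → a ∈ S) (complete : ∀ a ∈ S, ∀ᶠ t in atTop, p t a) :
    ∀ᶠ t in atTop, (List.range t).filter (p t) = S.sort := by
  have found : ∀ᶠ t in atTop, ∀ a ∈ S, a < t ∧ p t a :=
    (eventually_all_finset S).2 fun a ha => (eventually_gt_atTop a).and (complete a ha)
  filter_upwards [found] with t ht
  refine List.SortedLT.eq_of_mem_iff
    (List.sortedLT_range t |>.pairwise.filter _).sortedLT S.sortedLT_sort fun a => ?_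
  simp only [List.mem_filter, List.mem_range, Finset.mem_sort]
  exact ⟨fun h => sound t a h.2, ht a⟩

/-- The conjecture for `S` after the finite text `σ`. Bounding the candidates by the length of `σ`
makes it a finite search. -/
def guessS (σ : List (Option ℕ)) : List ℕ :=
  (List.range σ.length).filter fun a => some (Nat.pair a 0) ∈ σ

/-- The conjecture for `D` after the finite text `σ`, relative to the conjecture for `S`. -/
def guessD (σ : List (Option ℕ)) : List ℕ :=
  (List.range σ.length).filter fun b => ∃ a ∈ guessS σ, some (Nat.pair a b) ∈ σ

theorem primrec_guessS : Primrec guessS := by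
  have entry_seen : PrimrecRel fun (a : ℕ) (σ : List (Option ℕ)) => some (Nat.pair a 0) ∈ σ :=
    primrecRel_mem_list.comp Primrec.snd
      (Primrec.option_some.comp (Primrec₂.natPair.comp Primrec.fst (Primrec.const 0)))
  exact entry_seen.listFilter.comp (Primrec.list_range.comp Primrec.list_length) Primrec.id

theorem primrec_guessD : Primrec guessD := by
  have entry_seen : PrimrecRel fun (a : ℕ) (q : ℕ × List (Option ℕ)) =>
      some (Nat.pair a q.1) ∈ q.2 :=
    primrecRel_mem_list.comp (Primrec.snd.comp Primrec.snd)
      (Primrec.option_some.comp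
        (Primrec₂.natPair.comp Primrec.fst (Primrec.fst.comp Primrec.snd)))
  have column_seen : PrimrecRel fun (b : ℕ) (σ : List (Option ℕ)) =>
      ∃ a ∈ guessS σ, some (Nat.pair a b) ∈ σ :=
    entry_seen.exists_mem_list.comp (primrec_guessS.comp Primrec.snd) Primrec.id
  exact column_seen.listFilter.comp (Primrec.list_range.comp Primrec.list_length) Primrec.id

variable {S D : Finset ℕ} {T : ℕ → Option ℕ}

theorem mem_of_mem_guessS (hT : IsText (L_SD S D) T) {t a : ℕ}
    (ha : a ∈ guessS (textSeg T t)) : a ∈ S := by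
  simp only [guessS, List.mem_filter, decide_eq_true_eq] at ha
  exact pair_zero_mem_L_SD.1 (hT.mem_of_mem_textSeg ha.2)

theorem eventually_guessS_eq (hT : IsText (L_SD S D) T) :
    ∀ᶠ t in atTop, guessS (textSeg T t) = S.sort := by
  simp only [guessS, length_textSeg]
  refine eventually_filter_range_eq_sort (fun t a h => ?_) (fun a ha => ?_)
  · exact pair_zero_mem_L_SD.1 (hT.mem_of_mem_textSeg (of_decide_eq_true h))
  · simpa only [decide_eq_true_eq] using hT.eventually_mem_textSeg (pair_zero_mem_L_SD.2 ha)

theorem eventually_guessD_eq (hT : IsText (L_SD S D) T) {D' : Finset ℕ}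
    (hD' : ∀ b, b ∈ D' ↔ ∃ a ∈ S, Nat.pair a b ∈ L_SD S D) :
    ∀ᶠ t in atTop, guessD (textSeg T t) = D'.sort := by
  simp only [guessD, length_textSeg]
  refine eventually_filter_range_eq_sort (fun t b h => ?_) (fun b hb => ?_)
  · obtain ⟨a, ha, hab⟩ := of_decide_eq_true h
    exact (hD' b).2 ⟨a, mem_of_mem_guessS hT ha, hT.mem_of_mem_textSeg hab⟩
  · obtain ⟨a, ha, hab⟩ := (hD' b).1 hb
    filter_upwards [eventually_guessS_eq hT, hT.eventually_mem_textSeg hab] with t hS hseen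
    exact decide_eq_true ⟨a, hS ▸ (Finset.mem_sort _).2 ha, hseen⟩

theorem txtEx_L_SD : TxtEx {L | ∃ S D : Finset ℕ, L = L_SD S D} := by
  refine txtEx_of_eventually_eq
    (L := fun p : List ℕ × List ℕ => L_SD p.1.toFinset p.2.toFinset)
    primrecPred_mem_L_SD.computablePred.to_re
    (primrec_guessS.pair primrec_guessD).to_comp ?_
  rintro _ ⟨S, D, rfl⟩ T hT
  obtain ⟨D', hL, hD'⟩ := exists_L_SD_eq_and_mem_iff S D
  refine ⟨(S.sort, D'.sort), by simpa only [Finset.sort_toFinset] using hL, ?_⟩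
  filter_upwards [eventually_guessS_eq hT, eventually_guessD_eq hT hD'] with t hS hD
  rw [hS, hD]

end Text

section Informant

open Classical in
/-- The datum that an informant for `L` provides about `n`. -/
noncomputable def label (L : Set ℕ) (n : ℕ) : Datum := (n, decide (n ∈ L))

theorem label_eq_label_iff {L L' : Set ℕ} {n : ℕ} :
    label L n = label L' n ↔ n ∉ L ∆ L' := by
  simp only [label, Prod.mk.injEq, decide_eq_decide, true_and, Set.mem_symmDiff]
  tauto

theorem label_symmDiff_singleton_of_ne {L : Set ℕ} {n p : ℕ} (hn : n ≠ p) :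
    label (L ∆ {p}) n = label L n :=
  label_eq_label_iff.2 (by rwa [symmDiff_symmDiff_self'])

theorem label_symmDiff_singleton_self {L L' : Set ℕ} {p : ℕ} (hp : p ∈ L ∆ L') :
    label (L ∆ {p}) p = label L' p := by
  refine label_eq_label_iff.2 ?_
  simp only [Set.mem_symmDiff, Set.mem_singleton_iff] at hp ⊢
  tauto

theorem isInformant_label_comp (L : Set ℕ) {f : ℕ → ℕ} (hf : f.Surjective) :
    IsInformant L fun t => label L (f t) :=
  ⟨fun t => by simp [label], hf⟩

theorem ExLearns.exists_eventually_append_eq {M : List Datum →. ℕ} {L : Set ℕ} (hL : ExLearns M L)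
    (l : List ℕ) {f : ℕ → ℕ} (hf : ∀ n ∉ l, n ∈ Set.range f) :
    ∃ t₀ e, W e = L ∧
      ∀ t, t₀ ≤ t → M ((l ++ (List.range t).map f).map (label L)) = Part.some e := by
  let F : ℕ → ℕ := fun t => l.getD t (f (t - l.length))
  have hF : F.Surjective := by
    intro n
    by_cases hn : n ∈ l
    · obtain ⟨i, hi, rfl⟩ := List.mem_iff_getElem.1 hn
      exact ⟨i, List.getD_eq_getElem _ _ hi⟩
    · obtain ⟨i, rfl⟩ := hf n hn
      exact ⟨l.length + i, by simp [F]⟩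
  have hseg : ∀ t, seg (fun t => label L (F t)) (l.length + t) =
      (l ++ (List.range t).map f).map (label L) := by
    intro t
    have hl : (List.range l.length).map F = l :=
      List.ext_getElem (by simp) (by simp +contextual [F])
    have hF_add : F ∘ (l.length + ·) = f := by ext i; simp [F]
    rw [seg, ← Function.comp_def, ← List.map_map, List.range_add, List.map_append, hl,
      List.map_map, hF_add]
  obtain ⟨t₀, e, hW, he⟩ := hL _ (isInformant_label_comp L hF)
  exact ⟨t₀, e, hW, fun t ht => hseg t ▸ he _ (by lia)⟩

/-- `h` computes the hypothesis of the learner `M` on `σ⌢x` from its hypothesis on `σ` and from `x`,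
as in `Iterative`, except that `h` need not be computable. -/
def IsUpdateRule (M : List Datum →. ℕ) (h : ℕ × Datum →. ℕ) : Prop :=
  ∀ σ x, M (σ ++ [x]) = (M σ).bind fun e => h (e, x)

namespace IsUpdateRule

variable {M : List Datum →. ℕ} {h : ℕ × Datum →. ℕ}

theorem append_congr (hM : IsUpdateRule M h) {σ σ' : List Datum} (hσ : M σ = M σ')
    (τ : List Datum) : M (σ ++ τ) = M (σ' ++ τ) := by
  induction τ using List.reverseRecOn with
  | nil => simpa only [List.append_nil] using hσ
  | append_singleton τ x ih => rw [← List.append_assoc, ← List.append_assoc, hM, hM, ih]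

theorem append_eq_of_forall_mem (hM : IsUpdateRule M h) {σ τ : List Datum} {e : ℕ}
    (hσ : M σ = Part.some e) (hτ : ∀ x ∈ τ, h (e, x) = Part.some e) :
    M (σ ++ τ) = Part.some e := by
  induction τ using List.reverseRecOn with
  | nil => rwa [List.append_nil]
  | append_singleton τ x ih =>
    rw [← List.append_assoc, hM, ih fun y hy => hτ y (List.mem_append_left _ hy), Part.bind_some]
    exact hτ x (List.mem_append_right _ (List.mem_singleton_self x))

theorem exists_locking (hM : IsUpdateRule M h) {L : Set ℕ} (hL : ExLearns M L) (l : List ℕ) :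
    ∃ l' e, W e = L ∧ M ((l ++ l').map (label L)) = Part.some e ∧
      ∀ n, h (e, label L n) = Part.some e := by
  -- An informant repeating every datum infinitely often presents each of them after convergence.
  let f : ℕ → ℕ := fun t => t.unpair.1
  obtain ⟨t₀, e, hW, he⟩ :=
    hL.exists_eventually_append_eq l (f := f) fun n _ => ⟨Nat.pair n 0, by simp [f]⟩
  refine ⟨(List.range t₀).map f, e, hW, he t₀ le_rfl, fun n => ?_⟩
  have ht : t₀ ≤ Nat.pair n t₀ := Nat.right_le_pair n t₀
  have hnext : (l ++ (List.range (Nat.pair n t₀ + 1)).map f).map (label L) =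
      (l ++ (List.range (Nat.pair n t₀)).map f).map (label L) ++ [label L n] := by
    simp [List.range_succ, f]
  have hstep := he (Nat.pair n t₀ + 1) (by lia)
  rwa [hnext, hM, he _ ht, Part.bind_some] at hstep

theorem W_eq_of_stable (hM : IsUpdateRule M h) {L : Set ℕ} (hL : ExLearns M L) {l : List ℕ} {e : ℕ}
    (he : M (l.map (label L)) = Part.some e)
    (stable : ∀ n ∉ l, h (e, label L n) = Part.some e) : W e = L := by
  obtain ⟨m, hm⟩ := Infinite.exists_notMem_finset l.toFinset
  rw [List.mem_toFinset] at hm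
  let f : ℕ → ℕ := fun n => if n ∈ l then m else n
  have hf : ∀ n, f n ∉ l := fun n => by
    by_cases hn : n ∈ l <;> simp [f, hn, hm]
  obtain ⟨t₀, e', hW, he'⟩ :=
    hL.exists_eventually_append_eq l (f := f) fun n hn => ⟨n, if_neg hn⟩
  have hlim : M ((l ++ (List.range t₀).map f).map (label L)) = Part.some e := by
    rw [List.map_append]
    refine hM.append_eq_of_forall_mem he fun x hx => ?_
    obtain ⟨n, hn, rfl⟩ := List.mem_map.1 hx
    obtain ⟨i, -, rfl⟩ := List.mem_map.1 hn
    exact stable _ (hf i)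
  rwa [Part.some_injective (hlim.symm.trans (he' t₀ le_rfl))]

theorem exists_not_exLearns_of_infinite_symmDiff (hM : IsUpdateRule M h) {𝓛 : Set (Set ℕ)}
    {L₀ : Set ℕ} (h₀ : L₀ ∈ 𝓛)
    (H : ∀ F : Finset ℕ, ∃ L₁ ∈ 𝓛, Disjoint (F : Set ℕ) (L₁ ∆ L₀) ∧
      {p ∈ L₁ ∆ L₀ | L₁ ∆ {p} ∈ 𝓛}.Infinite) :
    ∃ L ∈ 𝓛, ¬ ExLearns M L := by
  by_contra! hL
  obtain ⟨l₀, e₀, -, hMe₀, lock₀⟩ := hM.exists_locking (hL L₀ h₀) []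
  rw [List.nil_append] at hMe₀
  obtain ⟨L₁, h₁, hdisj, hinf⟩ := H l₀.toFinset
  obtain ⟨l₁, e₁, hW₁, hMe₁, lock₁⟩ := hM.exists_locking (hL L₁ h₁) l₀
  obtain ⟨p, ⟨hp, h₂⟩, hpl⟩ := hinf.exists_notMem_finset (l₀ ++ l₁).toFinset
  rw [List.mem_toFinset] at hpl
  have label₁₀ : l₀.map (label L₁) = l₀.map (label L₀) :=
    List.map_congr_left fun n hn =>
      label_eq_label_iff.2 (Set.disjoint_left.1 hdisj (List.mem_toFinset.2 hn))
  have label₂₁ : ∀ n ∈ l₀ ++ l₁, label (L₁ ∆ {p}) n = label L₁ n := fun n hn =>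
    label_symmDiff_singleton_of_ne (ne_of_mem_of_not_mem hn hpl)
  have ignored : M (l₀.map (label L₀) ++ [label L₀ p]) = M (l₀.map (label L₀)) := by
    rw [hM, hMe₀, Part.bind_some, lock₀]
  have hMe₂ : M ((l₀ ++ [p] ++ l₁).map (label (L₁ ∆ {p}))) = Part.some e₁ := by
    rw [List.map_append, List.map_append, List.map_singleton, label_symmDiff_singleton_self hp,
      List.map_congr_left fun n hn => label₂₁ n (List.mem_append_left _ hn),
      List.map_congr_left fun n hn => label₂₁ n (List.mem_append_right _ hn),
      label₁₀, hM.append_congr ignored, ← label₁₀, ← List.map_append, hMe₁]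
  have hW₂ : W e₁ = L₁ ∆ {p} := hM.W_eq_of_stable (hL _ h₂) hMe₂ fun n hn => by
    rw [label_symmDiff_singleton_of_ne (by rintro rfl; simp at hn), lock₁]
  exact Set.singleton_ne_empty p (symmDiff_eq_left.1 (hW₂.symm.trans hW₁))

end IsUpdateRule

theorem mem_L_SD_singleton_symmDiff_iff {a m : ℕ} :
    m ∈ L_SD {a} ∅ ∆ L_SD ∅ ∅ ↔ m.unpair.1 = a := by
  simp only [L_SD, Set.mem_symmDiff, Set.mem_ofPred_eq, Finset.mem_singleton, Finset.notMem_empty]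
  tauto

theorem L_SD_singleton_symmDiff_pair {a b : ℕ} (hb : b ≠ 0) :
    L_SD {a} ∅ ∆ {Nat.pair a b} = L_SD {a} {b} := by
  ext m
  obtain ⟨⟨i, j⟩, rfl⟩ := Nat.pairEquiv.surjective m
  simp only [Nat.pairEquiv_apply, Function.uncurry_apply_pair, Set.mem_symmDiff, pair_mem_L_SD,
    Set.mem_singleton_iff, Nat.pair_eq_pair, Finset.mem_singleton, Finset.notMem_empty]
  by_cases hj : j = b
  · subst hj; tauto
  · tauto

theorem exists_not_exLearns_L_SD {M : List Datum →. ℕ} {h : ℕ × Datum →. ℕ}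
    (hM : IsUpdateRule M h) : ∃ S D, ¬ ExLearns M (L_SD S D) := by
  suffices ∃ L ∈ {L | ∃ S D : Finset ℕ, L = L_SD S D}, ¬ ExLearns M L by
    obtain ⟨_, ⟨S, D, rfl⟩, hSD⟩ := this
    exact ⟨S, D, hSD⟩
  refine hM.exists_not_exLearns_of_infinite_symmDiff ⟨∅, ∅, rfl⟩ fun F => ?_
  obtain ⟨a, ha⟩ := Infinite.exists_notMem_finset (F.image fun m => m.unpair.1)
  refine ⟨L_SD {a} ∅, ⟨{a}, ∅, rfl⟩, Set.disjoint_left.2 fun m hm hdiff => ?_, ?_⟩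
  · exact ha (Finset.mem_image.2 ⟨m, hm, mem_L_SD_singleton_symmDiff_iff.1 hdiff⟩)
  · refine Set.infinite_of_injective_forall_mem (f := fun b => Nat.pair a (b + 1))
      (fun b c hbc => by simpa [Nat.pair_eq_pair] using hbc) fun b => ⟨?_, {a}, {b + 1}, ?_⟩
    · simp [mem_L_SD_singleton_symmDiff_iff]
    · exact L_SD_singleton_symmDiff_pair b.succ_ne_zero

end Informant

theorem txtEx_not_itInfEx_general :
    IndexableFamily {L | ∃ S D : Finset ℕ, L = L_SD S D} ∧
    TxtEx {L | ∃ S D : Finset ℕ, L = L_SD S D} ∧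
    ∀ M h, IsUpdateRule M h → ∃ S D : Finset ℕ, ¬ ExLearns M (L_SD S D) :=
  ⟨indexableFamily_L_SD, txtEx_L_SD, fun _ _ => exists_not_exLearns_L_SD⟩

/-- The family `{ L_{S,D} : S, D finite }` is an indexable family which is
Ex-learnable from text but not Ex-learnable from informant by any iterative learner. -/
theorem txtEx_not_itInfEx :
    IndexableFamily {L | ∃ S D : Finset ℕ, L = L_SD S D} ∧
    TxtEx {L | ∃ S D : Finset ℕ, L = L_SD S D} ∧
    ¬ ItInfEx {L | ∃ S D : Finset ℕ, L = L_SD S D} := by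
  obtain ⟨hIndexable, hText, hInformant⟩ := txtEx_not_itInfEx_general
  refine ⟨hIndexable, hText, fun ⟨M, _, ⟨h, _, hM⟩, hL⟩ => ?_⟩
  obtain ⟨S, D, hSD⟩ := hInformant M h hM
  exact hSD (hL _ ⟨S, D, rfl⟩)
end

section
/- Let 𝐟 be the Boolean mapping. For every indexable family 𝓛, learnability being witnessed with respect to indexable hypothesis spaces: (1) if 𝓛 is Ex-learnable from informant with respect to some indexable hypothesis space, then 𝐟(𝓛) is Ex-learnable from text with respect to an indexable hypothesis space; (2) if 𝐟(𝓛) is Ex-learnable from informant by an iterative learner with respect to some indexable hypothesis space, then 𝓛 is Ex-learnable from informant by an iterative learner with respect to an indexable hypothesis space. -/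
/-- `H` is an indexable hypothesis space, given by a uniform decision procedure. -/
def IndexedHyp (H : ℕ → Set ℕ) : Prop :=
  ∃ f : ℕ → ℕ → Bool, Computable₂ f ∧ ∀ i, H i = {n | f i n = true}

/-- `M` Ex-learns `L` from informant with respect to the hypothesis space `H`. -/
def ExLearnsWrt (H : ℕ → Set ℕ) (M : List Datum →. ℕ) (L : Set ℕ) : Prop :=
  ∀ I, IsInformant L I → ∃ t₀ e, H e = L ∧ ∀ t, t₀ ≤ t → M (seg I t) = Part.some e

/-- `M` Ex-learns `L` from text with respect to the hypothesis space `H`. -/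
def TxtExLearnsWrt (H : ℕ → Set ℕ) (M : List (Option ℕ) →. ℕ) (L : Set ℕ) : Prop :=
  ∀ T, IsText L T → ∃ t₀ e, H e = L ∧ ∀ t, t₀ ≤ t → M (textSeg T t) = Part.some e

/-- The Boolean mapping `𝐟`: `2n ∈ 𝐟(L) ↔ n ∈ L` and `2n+1 ∈ 𝐟(L) ↔ n ∉ L`. -/
def fbool (L : Set ℕ) : Set ℕ := {m | if m % 2 = 0 then m / 2 ∈ L else m / 2 ∉ L}

/-!
Passing from `L` to `𝐟(L)` turns negative information into positive information: `𝐟(A) ⊆ 𝐟(B)`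
already forces `A = B`. Languages that form an antichain under inclusion are learnable from text by
enumeration: guess the least index that is consistent with the data. Every wrong smaller index is
refuted by some element of the target, and the least correct index never is, which gives (1).

For (2), each datum `(n, b)` about `L` determines the two data `(2n, b)` and `(2n + 1, ¬b)` about
`𝐟(L)`. A learner for `L` feeds this pair to the given learner and reads a hypothesis `e` for `𝐟(L)`
as one for `L = {n | 2n ∈ 𝐟(L)}`. Feeding a block of data to an iterative learner is again a
single update of its hypothesis.
-/

section ListFolds

variable {α β σ : Type*} [Primcodable α] [Primcodable β] [Primcodable σ]

theorem partrec_list_foldlM {f : α → List β} {g : α → σ} {h : α → σ × β →. σ}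
    (hf : Computable f) (hg : Computable g) (hh : Partrec₂ h) :
    Partrec fun a => (f a).foldlM (fun s b => h a (s, b)) (g a) := by
  have hstep : Partrec₂ fun (a : α) (p : ℕ × σ) =>
      (Option.casesOn (f a)[p.1]? (Part.some p.2) fun b => h a (p.2, b) : Part σ) :=
    Partrec.optionCasesOn_right
      (Computable.list_getElem?.comp (hf.comp .fst) (Computable.fst.comp .snd))
      (Computable.snd.comp .snd)
      (hh.comp (Computable.fst.comp .fst)
        (((Computable.snd.comp .snd).comp .fst).pair .snd)).to₂
  refine (Partrec.nat_rec (Computable.list_length.comp hf) hg.partrec hstep).of_eq fun a => ?_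
  have hprefix : ∀ n, (Nat.rec (Part.some (g a)) (fun j r => r.bind fun s =>
      Option.casesOn (f a)[j]? (Part.some s) fun b => h a (s, b)) n : Part σ) =
      ((f a).take n).foldlM (fun s b => h a (s, b)) (g a) := by
    intro n
    induction n with
    | zero => rfl
    | succ n ih =>
      simp only [ih, List.take_add_one, List.foldlM_append, Part.bind_eq_bind]
      cases (f a)[n]? <;> simp [Part.pure_eq_some]
  exact (hprefix (f a).length).trans (by rw [List.take_length])

theorem computable_list_foldl {f : α → List β} {g : α → σ} {h : α → σ × β → σ}
    (hf : Computable f) (hg : Computable g) (hh : Computable₂ h) :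
    Computable fun a => (f a).foldl (fun s b => h a (s, b)) (g a) :=
  (partrec_list_foldlM hf hg hh.partrec₂).of_eq fun _ => List.foldlM_pure

theorem computable_list_all {f : α → List β} {p : α → β → Bool}
    (hf : Computable f) (hp : Computable₂ p) : Computable fun a => (f a).all (p a) := by
  have hfold (q : β → Bool) (l : List β) (c : Bool) :
      l.foldl (fun r b => r && q b) c = (c && l.all q) := by
    induction l generalizing c with
    | nil => simp
    | cons b l ih => simp [ih, Bool.and_assoc]
  have hand : Computable₂ fun (a : α) (x : Bool × β) => x.1 && p a x.2 :=
    Primrec.and.to_comp.comp (Computable.fst.comp .snd) (hp.comp .fst (Computable.snd.comp .snd))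
  exact (computable_list_foldl hf (.const true) hand).of_eq fun a => by
    rw [hfold, Bool.true_and]

end ListFolds

theorem computable_list_reduceOption {α : Type*} [Primcodable α] :
    Computable (List.reduceOption : List (Option α) → List α) :=
  (Primrec.listFilterMap .id Primrec.snd.to₂).to_comp

theorem IndexedHyp.preimage {H : ℕ → Set ℕ} (hH : IndexedHyp H) {g : ℕ → ℕ} (hg : Computable g) :
    IndexedHyp fun i => g ⁻¹' H i := by
  obtain ⟨f, hf, hfH⟩ := hH
  exact ⟨fun i n => f i (g n), hf.comp .fst (hg.comp .snd), fun i => by simp only [hfH]; rfl⟩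

section BooleanMapping

variable {L A B : Set ℕ} {n : ℕ}

theorem two_mul_mem_fbool : 2 * n ∈ fbool L ↔ n ∈ L := by
  simp [fbool]

theorem two_mul_add_one_mem_fbool : 2 * n + 1 ∈ fbool L ↔ n ∉ L := by
  simp [fbool, Nat.mul_add_div]

theorem preimage_two_mul_fbool (L : Set ℕ) : (2 * ·) ⁻¹' fbool L = L :=
  Set.ext fun _ => two_mul_mem_fbool

theorem eq_of_fbool_subset_fbool (h : fbool A ⊆ fbool B) : A = B := by
  refine Set.Subset.antisymm (fun n hn => ?_) fun n hnB => ?_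
  · exact two_mul_mem_fbool.1 (h (two_mul_mem_fbool.2 hn))
  · by_contra hnA
    exact two_mul_add_one_mem_fbool.1 (h (two_mul_add_one_mem_fbool.2 hnA)) hnB

theorem isAntichain_range_fbool : IsAntichain (· ≤ ·) (Set.range fbool) := by
  rintro _ ⟨A, rfl⟩ _ ⟨B, rfl⟩ hne hle
  exact hne (congrArg fbool (eq_of_fbool_subset_fbool hle))

theorem IndexedHyp.map_fbool {H : ℕ → Set ℕ} (hH : IndexedHyp H) :
    IndexedHyp fun i => fbool (H i) := by
  obtain ⟨f, hf, hfH⟩ := hH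
  have hhalf : Computable fun p : ℕ × ℕ => f p.1 (p.2 / 2) :=
    hf.comp .fst (Primrec.nat_div.comp .snd (.const 2)).to_comp
  have heven : Computable fun p : ℕ × ℕ => decide (p.2 % 2 = 0) :=
    (Primrec.eq.comp (Primrec.nat_mod.comp .snd (.const 2)) (.const 0)).decide.to_comp
  refine ⟨fun i m => bif decide (m % 2 = 0) then f i (m / 2) else !f i (m / 2),
    heven.cond hhalf (Primrec.not.to_comp.comp hhalf), fun i => ?_⟩
  ext m
  by_cases hm : m % 2 = 0 <;> simp [fbool, hfH, hm]

end BooleanMapping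

section LearningFromText

/-- Identification by enumeration in the hypothesis space decided by `f`: the hypothesis is the
least index whose language contains all the data. It is undefined if there is no such index. -/
def enumerationLearner (f : ℕ → ℕ → Bool) : List (Option ℕ) →. ℕ := fun τ =>
  Nat.rfind fun i => Part.some (τ.reduceOption.all (f i))

variable {f : ℕ → ℕ → Bool}

theorem partrec_enumerationLearner (hf : Computable₂ f) : Partrec (enumerationLearner f) := by
  have hconsistent : Computable₂ fun (τ : List (Option ℕ)) i => τ.reduceOption.all (f i) :=
    computable_list_all (computable_list_reduceOption.comp .fst)
      (hf.comp (Computable.snd.comp .fst) .snd).to₂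
  exact Partrec.rfind hconsistent.partrec₂

theorem enumerationLearner_eq_some {τ : List (Option ℕ)} {e : ℕ}
    (hconsistent : ∀ n, some n ∈ τ → f e n = true)
    (hrefuted : ∀ k < e, ∃ n, some n ∈ τ ∧ f k n = false) :
    enumerationLearner f τ = Part.some e := by
  refine Part.eq_some_iff.2 (Nat.mem_rfind.2 ⟨?_, fun {k} hk => ?_⟩)
  · rw [Part.mem_some_iff, eq_comm]
    simpa [List.reduceOption_mem_iff] using hconsistent
  · rw [Part.mem_some_iff, eq_comm]
    simpa [List.reduceOption_mem_iff] using hrefuted k hk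

theorem some_mem_textSeg {T : ℕ → Option ℕ} {t n : ℕ} :
    some n ∈ textSeg T t ↔ ∃ j < t, T j = some n := by
  simp [textSeg]

theorem enumerationLearner_txtExLearnsWrt {L : Set ℕ} {e : ℕ} (he : {n | f e n = true} = L)
    (hmin : ∀ k < e, ¬ L ⊆ {n | f k n = true}) :
    TxtExLearnsWrt (fun i => {n | f i n = true}) (enumerationLearner f) L := by
  intro T hT
  have hrefuted : ∀ᶠ t in Filter.atTop, ∀ k ∈ Finset.range e,
      ∃ n, some n ∈ textSeg T t ∧ f k n = false := by
    refine (Filter.eventually_all_finset _).2 fun k hk => ?_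
    obtain ⟨n, hnL, hnk⟩ := Set.not_subset.1 (hmin k (Finset.mem_range.1 hk))
    obtain ⟨j, hj⟩ := (hT n).1 hnL
    filter_upwards [Filter.eventually_gt_atTop j] with t ht
    exact ⟨n, some_mem_textSeg.2 ⟨j, ht, hj⟩, Bool.eq_false_of_not_eq_true hnk⟩
  obtain ⟨t₀, ht₀⟩ := Filter.eventually_atTop.1 hrefuted
  refine ⟨t₀, e, he, fun t ht => enumerationLearner_eq_some (fun n hn => ?_) fun k hk =>
    ht₀ t ht k (Finset.mem_range.2 hk)⟩
  obtain ⟨j, -, hj⟩ := some_mem_textSeg.1 hn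
  have hnL : n ∈ L := (hT n).2 ⟨j, hj⟩
  rwa [← he] at hnL

theorem IndexedHyp.exists_txtExLearnsWrt_of_maximal {H : ℕ → Set ℕ} (hH : IndexedHyp H) :
    ∃ M : List (Option ℕ) →. ℕ, Partrec M ∧
      ∀ L, Maximal (· ∈ Set.range H) L → TxtExLearnsWrt H M L := by
  classical
  obtain ⟨f, hf, hfH⟩ := hH
  obtain rfl : H = fun i => {n | f i n = true} := funext hfH
  refine ⟨enumerationLearner f, partrec_enumerationLearner hf, fun L hL => ?_⟩
  have hex : ∃ e, {n | f e n = true} = L := hL.prop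
  refine enumerationLearner_txtExLearnsWrt (Nat.find_spec hex) fun k hk hsub => ?_
  exact Nat.find_min hex hk (hL.eq_of_subset ⟨k, rfl⟩ hsub).symm

theorem IndexedHyp.exists_txtExLearnsWrt_fbool {H : ℕ → Set ℕ} (hH : IndexedHyp H) :
    ∃ M : List (Option ℕ) →. ℕ, Partrec M ∧
      ∀ i, TxtExLearnsWrt (fun j => fbool (H j)) M (fbool (H i)) := by
  obtain ⟨M, hM, hlearns⟩ := hH.map_fbool.exists_txtExLearnsWrt_of_maximal
  have hantichain : IsAntichain (· ≤ ·) (Set.range fun j => fbool (H j)) :=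
    isAntichain_range_fbool.subset (Set.range_comp_subset_range H fbool)
  exact ⟨M, hM, fun i => hlearns _ (hantichain.maximal_mem_iff.2 ⟨i, rfl⟩)⟩

end LearningFromText

section LearningFromInformant

theorem Iterative.comp_flatMap {M : List Datum →. ℕ} (hM : Iterative M)
    {d : Datum → List Datum} (hd : Computable d) : Iterative fun σ => M (σ.flatMap d) := by
  obtain ⟨h, hh, hstep⟩ := hM
  have happend (σ τ : List Datum) :
      M (σ ++ τ) = (M σ).bind fun e => τ.foldlM (fun e x => h (e, x)) e := by
    induction τ generalizing σ with
    | nil => simp [Part.pure_eq_some]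
    | cons x τ ih =>
      rw [List.append_cons, ih, hstep, Part.bind_assoc]
      rfl
  refine ⟨fun p => (d p.2).foldlM (fun e x => h (e, x)) p.1,
    partrec_list_foldlM (hd.comp .snd) .fst (hh.comp .snd).to₂, fun σ x => ?_⟩
  simp only [List.flatMap_append, List.flatMap_singleton, happend]

/-- The two data about `𝐟(L)` carried by a datum about `L`. -/
def fboolData (x : Datum) : List Datum := [(2 * x.1, x.2), (2 * x.1 + 1, !x.2)]

/-- The informant for `𝐟(L)` obtained from an informant for `L` by replacing each datum `x` with
the block `fboolData x`. -/
def fboolInformant (I : ℕ → Datum) (t : ℕ) : Datum :=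
  if t % 2 = 0 then (2 * (I (t / 2)).1, (I (t / 2)).2)
  else (2 * (I (t / 2)).1 + 1, !(I (t / 2)).2)

variable {I : ℕ → Datum} {L : Set ℕ}

theorem primrec_fboolData : Primrec fboolData :=
  Primrec.list_cons.comp ((Primrec.nat_double.comp .fst).pair .snd)
    (Primrec.list_cons.comp
      ((Primrec.nat_double_succ.comp .fst).pair (Primrec.not.comp .snd)) (.const []))

theorem fboolInformant_two_mul (I : ℕ → Datum) (t : ℕ) :
    fboolInformant I (2 * t) = (2 * (I t).1, (I t).2) := by
  simp [fboolInformant]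

theorem fboolInformant_two_mul_add_one (I : ℕ → Datum) (t : ℕ) :
    fboolInformant I (2 * t + 1) = (2 * (I t).1 + 1, !(I t).2) := by
  simp [fboolInformant, Nat.mul_add_div]

theorem seg_succ (I : ℕ → Datum) (t : ℕ) : seg I (t + 1) = seg I t ++ [I t] := by
  simp [seg, List.range_succ]

theorem seg_flatMap_fboolData (I : ℕ → Datum) (t : ℕ) :
    (seg I t).flatMap fboolData = seg (fboolInformant I) (2 * t) := by
  induction t with
  | zero => rfl
  | succ t ih =>
    rw [Nat.mul_succ, seg_succ, seg_succ, seg_succ, List.flatMap_append, ih,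
      fboolInformant_two_mul, fboolInformant_two_mul_add_one]
    simp [fboolData]

theorem IsInformant.map_fbool (hI : IsInformant L I) :
    IsInformant (fbool L) (fboolInformant I) := by
  refine ⟨fun t => ?_, fun m => ?_⟩
  · obtain ⟨s, rfl | rfl⟩ := t.even_or_odd'
    · rw [fboolInformant_two_mul, two_mul_mem_fbool]
      exact hI.1 s
    · rw [fboolInformant_two_mul_add_one, two_mul_add_one_mem_fbool, ← hI.1 s]
      simp
  · obtain ⟨n, hn⟩ := m.even_or_odd'
    obtain ⟨t, rfl⟩ := hI.2 n
    obtain rfl | rfl := hn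
    · exact ⟨2 * t, by simp only [fboolInformant_two_mul]⟩
    · exact ⟨2 * t + 1, by simp only [fboolInformant_two_mul_add_one]⟩

theorem ExLearnsWrt.of_fbool {H : ℕ → Set ℕ} {M : List Datum →. ℕ}
    (hM : ExLearnsWrt H M (fbool L)) :
    ExLearnsWrt (fun i => (2 * ·) ⁻¹' H i) (fun σ => M (σ.flatMap fboolData)) L := by
  intro I hI
  obtain ⟨t₀, e, he, hconv⟩ := hM _ hI.map_fbool
  refine ⟨t₀, e, by simp only [he, preimage_two_mul_fbool], fun t ht => ?_⟩
  simp only [seg_flatMap_fboolData]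
  exact hconv (2 * t) (by lia)

end LearningFromInformant

theorem boolean_mapping_transfer_general (𝓛 : Set (Set ℕ)) :
    ((∃ H : ℕ → Set ℕ, IndexedHyp H ∧ ∀ L ∈ 𝓛, ∃ i, H i = L) →
      (∃ H' : ℕ → Set ℕ, IndexedHyp H' ∧ (∀ L ∈ fbool '' 𝓛, ∃ i, H' i = L) ∧
        ∃ M' : List (Option ℕ) →. ℕ, Partrec M' ∧ ∀ L ∈ fbool '' 𝓛, TxtExLearnsWrt H' M' L)) ∧
    ((∃ H : ℕ → Set ℕ, IndexedHyp H ∧ (∀ L ∈ fbool '' 𝓛, ∃ i, H i = L) ∧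
        ∃ M : List Datum →. ℕ, Partrec M ∧ Iterative M ∧ ∀ L ∈ fbool '' 𝓛, ExLearnsWrt H M L) →
      (∃ H' : ℕ → Set ℕ, IndexedHyp H' ∧ (∀ L ∈ 𝓛, ∃ i, H' i = L) ∧
        ∃ M : List Datum →. ℕ, Partrec M ∧ Iterative M ∧ ∀ L ∈ 𝓛, ExLearnsWrt H' M L)) := by
  constructor
  · rintro ⟨H, hH, hcover⟩
    have hcover' : ∀ L ∈ fbool '' 𝓛, ∃ i, fbool (H i) = L := Set.forall_mem_image.2 fun L hL =>
      (hcover L hL).imp fun _ => congrArg fbool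
    obtain ⟨M, hM, hlearns⟩ := hH.exists_txtExLearnsWrt_fbool
    refine ⟨fun i => fbool (H i), hH.map_fbool, hcover', M, hM, fun L hL => ?_⟩
    obtain ⟨i, rfl⟩ := hcover' L hL
    exact hlearns i
  · rintro ⟨H, hH, hcover, M, hM, hiter, hlearns⟩
    refine ⟨fun i => (2 * ·) ⁻¹' H i, hH.preimage Primrec.nat_double.to_comp, fun L hL => ?_,
      fun σ => M (σ.flatMap fboolData), ?_, hiter.comp_flatMap primrec_fboolData.to_comp,
      fun L hL => (hlearns _ ⟨L, hL, rfl⟩).of_fbool⟩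
    · obtain ⟨i, hi⟩ := hcover _ ⟨L, hL, rfl⟩
      exact ⟨i, by simp only [hi, preimage_two_mul_fbool]⟩
    · exact hM.comp (Primrec.list_flatMap .id (primrec_fboolData.comp .snd).to₂).to_comp

/-- For an indexable family `𝓛` (learnability witnessed by indexable hypothesis spaces):
(1) if `𝓛` is Ex-learnable from informant, then `𝐟(𝓛)` is Ex-learnable from text;
(2) if `𝐟(𝓛)` is Ex-learnable from informant by an iterative learner, then so is `𝓛`. -/
theorem boolean_mapping_transfer (𝓛 : Set (Set ℕ)) (h𝓛 : IndexableFamily 𝓛) :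
    ((∃ H : ℕ → Set ℕ, IndexedHyp H ∧ (∀ L ∈ 𝓛, ∃ i, H i = L) ∧
        ∃ M : List Datum →. ℕ, Partrec M ∧ ∀ L ∈ 𝓛, ExLearnsWrt H M L) →
      (∃ H' : ℕ → Set ℕ, IndexedHyp H' ∧ (∀ L ∈ fbool '' 𝓛, ∃ i, H' i = L) ∧
        ∃ M' : List (Option ℕ) →. ℕ, Partrec M' ∧ ∀ L ∈ fbool '' 𝓛, TxtExLearnsWrt H' M' L)) ∧
    ((∃ H : ℕ → Set ℕ, IndexedHyp H ∧ (∀ L ∈ fbool '' 𝓛, ∃ i, H i = L) ∧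
        ∃ M : List Datum →. ℕ, Partrec M ∧ Iterative M ∧ ∀ L ∈ fbool '' 𝓛, ExLearnsWrt H M L) →
      (∃ H' : ℕ → Set ℕ, IndexedHyp H' ∧ (∀ L ∈ 𝓛, ∃ i, H' i = L) ∧
        ∃ M : List Datum →. ℕ, Partrec M ∧ Iterative M ∧ ∀ L ∈ 𝓛, ExLearnsWrt H' M L)) := by
  obtain ⟨htext, hiterative⟩ := boolean_mapping_transfer_general 𝓛
  exact ⟨fun ⟨H, hH, hcover, _⟩ => htext ⟨H, hH, hcover⟩, hiterative⟩
end

section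
/- Cautiousness restricts iterative learning from informant: the indexable family 𝓛 = {ℕ} ∪ { ℕ\{x} : x ∈ ℕ } is Ex-learnable from informant by a total iterative learner, but no iterative learner that is cautious on every informant for every member of 𝓛 Ex-learns 𝓛 from informant. In particular [ItInfCautEx] ⊊ [ItInfEx]. -/
/-- `M` is cautious on the informant `I`: it never conjectures a proper subset
of a previously conjectured language. -/
def CautiousOn (M : List Datum →. ℕ) (I : ℕ → Datum) : Prop :=
  ∀ s t, s ≤ t → ∀ e e', M (seg I s) = Part.some e → M (seg I t) = Part.some e' →
    ¬ (W e' ⊂ W e)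

/-- `𝓛 ∈ [ItInfCautEx]`: some iterative learner Ex-learns every member of `𝓛`
from informant and is cautious on every informant for every member of `𝓛`. -/
def ItInfCautEx (𝓛 : Set (Set ℕ)) : Prop :=
  ∃ M : List Datum →. ℕ, Partrec M ∧ Iterative M ∧
    (∀ L ∈ 𝓛, ExLearns M L) ∧
    ∀ L ∈ 𝓛, ∀ I, IsInformant L I → CautiousOn M I

/-- The family `{ℕ} ∪ { ℕ\{x} : x ∈ ℕ }`. -/
def famCaut : Set (Set ℕ) := {Set.univ} ∪ {L | ∃ x : ℕ, L = {x}ᶜ}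

/-!
Learning `famCaut` only requires the most recent negative datum: conjecture `ℕ` until some `x` is
labeled negatively, then conjecture `ℕ \ {x}`. Caution rules this out: a learner that has settled
on `ℕ` after `t` positive data has not yet excluded `ℕ \ {t}`, and learning that language would
force it to retract to a proper subset. The same happens at any language that has proper
subsets in the class agreeing with it on arbitrarily long initial segments of `ℕ`.
-/

theorem indexableFamily_range_s4 {L : ℕ → Set ℕ} (hL : ComputablePred fun p : ℕ × ℕ => p.2 ∈ L p.1) :
    IndexableFamily (Set.range L) := by
  obtain ⟨hdec, hcomp⟩ := hL
  exact ⟨fun i n => @decide (n ∈ L i) (hdec (i, n)), hcomp, by simp⟩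

theorem exists_primrec_index {L : ℕ → Set ℕ} (hL : REPred fun p : ℕ × ℕ => p.2 ∈ L p.1) :
    ∃ g : ℕ → ℕ, Primrec g ∧ ∀ i, W (g i) = L i := by
  obtain ⟨c, hc⟩ := Nat.Partrec.Code.exists_code.1 <| Partrec.nat_iff.1 <|
    (hL.comp Computable.unpair).map (Computable.const 0).to₂
  refine ⟨fun i => Encodable.encode (c.curry i),
    Primrec.encode.comp (Nat.Partrec.Code.primrec₂_curry.comp (Primrec.const c) Primrec.id), ?_⟩
  intro i
  ext n
  simp [W, hc, Part.assert]

section FoldLearner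

variable {step : ℕ → Datum → ℕ} {e₀ : ℕ}

/-- The total iterative learner with initial conjecture `e₀` that replaces its conjecture `e` by
`step e x` on reading the datum `x`. -/
def foldLearner (step : ℕ → Datum → ℕ) (e₀ : ℕ) : List Datum →. ℕ :=
  fun σ => Part.some (σ.foldl step e₀)

theorem partrec_foldLearner (hstep : Primrec₂ step) : Partrec (foldLearner step e₀) :=
  (Primrec.list_foldl Primrec.id (Primrec.const e₀)
    (hstep.comp (Primrec.fst.comp Primrec.snd)
      (Primrec.snd.comp Primrec.snd)).to₂).to_comp.partrec

theorem iterative_foldLearner (hstep : Computable₂ step) : Iterative (foldLearner step e₀) :=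
  ⟨fun p => Part.some (step p.1 p.2), hstep.partrec, fun σ x => by simp [foldLearner]⟩

theorem foldl_seg_succ (I : ℕ → Datum) (t : ℕ) :
    (seg I (t + 1)).foldl step e₀ = step ((seg I t).foldl step e₀) (I t) := by
  simp [seg, List.range_succ]

theorem exLearnsFrom_foldLearner {L : Set ℕ} {I : ℕ → Datum} {t₀ e : ℕ} (hW : W e = L)
    (hreach : (seg I t₀).foldl step e₀ = e) (hfix : ∀ t ≥ t₀, step e (I t) = e) :
    ExLearnsFrom (foldLearner step e₀) L I := by
  refine ⟨t₀, e, hW, fun t ht => congrArg Part.some ?_⟩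
  induction t, ht using Nat.le_induction with
  | base => exact hreach
  | succ t ht ih => rw [foldl_seg_succ, ih, hfix t ht]

end FoldLearner

theorem IsInformant.snd_eq_false_iff {L : Set ℕ} {I : ℕ → Datum} (hI : IsInformant L I) {t : ℕ} :
    (I t).2 = false ↔ (I t).1 ∉ L := by
  rw [← hI.1 t, Bool.not_eq_true]

section Caution

variable {L L' : Set ℕ}

open Classical in
/-- The informant for `L` that presents the natural numbers in increasing order. -/
noncomputable def canonicalInformant (L : Set ℕ) (t : ℕ) : Datum :=
  (t, decide (t ∈ L))

theorem isInformant_canonicalInformant (L : Set ℕ) : IsInformant L (canonicalInformant L) :=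
  ⟨fun t => by simp [canonicalInformant], fun n => ⟨n, rfl⟩⟩

theorem seg_canonicalInformant_congr {t : ℕ} (h : ∀ n < t, n ∈ L ↔ n ∈ L') :
    seg (canonicalInformant L) t = seg (canonicalInformant L') t :=
  List.map_congr_left fun n hn => by simp [canonicalInformant, h n (List.mem_range.1 hn)]

variable {M : List Datum →. ℕ}

theorem ExLearnsFrom.not_cautiousOn {I : ℕ → Datum} {s e : ℕ} (hL : ExLearnsFrom M L I)
    (hs : M (seg I s) = Part.some e) (hlt : L ⊂ W e) : ¬ CautiousOn M I := by
  obtain ⟨t₀, e', rfl, hconv⟩ := hL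
  exact fun hC =>
    hC s (max s t₀) (le_max_left s t₀) e e' hs (hconv _ (le_max_right s t₀)) hlt

theorem exists_not_cautiousOn {𝓛 : Set (Set ℕ)} (hM : ∀ L ∈ 𝓛, ExLearns M L) (hL : L ∈ 𝓛)
    (hacc : ∀ t, ∃ L' ∈ 𝓛, L' ⊂ L ∧ ∀ n < t, n ∈ L' ↔ n ∈ L) :
    ∃ L' ∈ 𝓛, ∃ I, IsInformant L' I ∧ ¬ CautiousOn M I := by
  obtain ⟨t, e, rfl, hconv⟩ := hM L hL _ (isInformant_canonicalInformant L)
  obtain ⟨L', hL', hlt, hagree⟩ := hacc t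
  have hI := isInformant_canonicalInformant L'
  have hconj : M (seg (canonicalInformant L') t) = Part.some e := by
    rw [seg_canonicalInformant_congr hagree, hconv t le_rfl]
  exact ⟨L', hL', _, hI, (hM L' hL' _ hI).not_cautiousOn hconj hlt⟩

end Caution

theorem ItInfCautEx.itInfEx {𝓛 : Set (Set ℕ)} : ItInfCautEx 𝓛 → ItInfEx 𝓛 :=
  fun ⟨M, hM, hit, hlearn, _⟩ => ⟨M, hM, hit, hlearn⟩

/-- The enumeration `ℕ, ℕ \ {0}, ℕ \ {1}, …` of `famCaut`. -/
def famCautEnum : ℕ → Set ℕ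
  | 0 => Set.univ
  | x + 1 => {x}ᶜ

theorem mem_famCautEnum {i n : ℕ} : n ∈ famCautEnum i ↔ i ≠ n + 1 := by
  cases i <;> simp [famCautEnum, eq_comm]

theorem range_famCautEnum : Set.range famCautEnum = famCaut := by
  ext L
  constructor
  · rintro ⟨_ | x, rfl⟩
    exacts [Or.inl rfl, Or.inr ⟨x, rfl⟩]
  · rintro (rfl | ⟨x, rfl⟩)
    exacts [⟨0, rfl⟩, ⟨x + 1, rfl⟩]

theorem primrecPred_mem_famCautEnum : PrimrecPred fun p : ℕ × ℕ => p.2 ∈ famCautEnum p.1 :=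
  (Primrec.eq.comp Primrec.fst (Primrec.succ.comp Primrec.snd)).not.of_eq
    fun _ => mem_famCautEnum.symm

theorem indexableFamily_famCaut : IndexableFamily famCaut :=
  range_famCautEnum ▸ indexableFamily_range_s4 primrecPred_mem_famCautEnum.computablePred

/-- The update rule of the learner for `famCaut`: a negative datum `(x, false)` changes the
conjecture to `g (x + 1)`, where `g` lists hypotheses for `famCautEnum`. -/
def lastNegStep (g : ℕ → ℕ) (e : ℕ) (d : Datum) : ℕ :=
  bif d.2 then e else g (d.1 + 1)

section LastNegStep

variable {g : ℕ → ℕ}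

theorem primrec₂_lastNegStep (hg : Primrec g) : Primrec₂ (lastNegStep g) :=
  Primrec.cond (Primrec.snd.comp Primrec.snd) Primrec.fst
    (hg.comp (Primrec.succ.comp (Primrec.fst.comp Primrec.snd)))

theorem lastNegStep_of_pos {e : ℕ} {d : Datum} (hd : d.2 = true) : lastNegStep g e d = e := by
  simp [lastNegStep, hd]

theorem lastNegStep_of_neg {e : ℕ} {d : Datum} (hd : d.2 = false) :
    lastNegStep g e d = g (d.1 + 1) := by
  simp [lastNegStep, hd]

theorem exLearns_univ_lastNegStep (hW : W (g 0) = Set.univ) :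
    ExLearns (foldLearner (lastNegStep g) (g 0)) Set.univ := fun _ hI =>
  exLearnsFrom_foldLearner (t₀ := 0) hW rfl fun t _ => lastNegStep_of_pos ((hI.1 t).2 trivial)

theorem exLearns_compl_singleton_lastNegStep {x e₀ : ℕ} (hW : W (g (x + 1)) = {x}ᶜ) :
    ExLearns (foldLearner (lastNegStep g) e₀) {x}ᶜ := by
  intro I hI
  have neg_iff (t : ℕ) : (I t).2 = false ↔ (I t).1 = x := by simp [hI.snd_eq_false_iff]
  obtain ⟨s, hs : (I s).1 = x⟩ := hI.2 x
  refine exLearnsFrom_foldLearner (t₀ := s + 1) hW ?_ fun t _ => ?_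
  · rw [foldl_seg_succ, lastNegStep_of_neg ((neg_iff s).2 hs), hs]
  · cases hlabel : (I t).2 with
    | true => exact lastNegStep_of_pos hlabel
    | false => rw [lastNegStep_of_neg hlabel, (neg_iff t).1 hlabel]

end LastNegStep

theorem exists_total_iterative_learner_famCaut :
    ∃ M : List Datum →. ℕ, Partrec M ∧ Iterative M ∧ (∀ σ, (M σ).Dom) ∧
      ∀ L ∈ famCaut, ExLearns M L := by
  obtain ⟨g, hg, hW⟩ := exists_primrec_index primrecPred_mem_famCautEnum.computablePred.to_re
  have hstep : Primrec₂ (lastNegStep g) := primrec₂_lastNegStep hg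
  refine ⟨foldLearner (lastNegStep g) (g 0), partrec_foldLearner hstep,
    iterative_foldLearner hstep.to_comp, fun _ => trivial, ?_⟩
  rintro L (rfl | ⟨x, rfl⟩)
  · exact exLearns_univ_lastNegStep (hW 0)
  · exact exLearns_compl_singleton_lastNegStep (hW (x + 1))

theorem exists_mem_famCaut_ssubset_univ (t : ℕ) :
    ∃ L ∈ famCaut, L ⊂ Set.univ ∧ ∀ n < t, n ∈ L ↔ n ∈ Set.univ :=
  ⟨{t}ᶜ, Or.inr ⟨t, rfl⟩, by simp [Set.ssubset_univ_iff], fun n hn => by simp [hn.ne]⟩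

theorem not_itInfCautEx_famCaut : ¬ ItInfCautEx famCaut := by
  rintro ⟨M, -, -, hM, hC⟩
  obtain ⟨L, hL, I, hI, hnot⟩ :=
    exists_not_cautiousOn hM (Or.inl rfl) exists_mem_famCaut_ssubset_univ
  exact hnot (hC L hL I hI)

/-- Cautiousness restricts iterative learning from informant: `famCaut` is an indexable
family Ex-learnable from informant by a total iterative learner, but not cautiously
Ex-learnable by any iterative learner; in particular `[ItInfCautEx] ⊊ [ItInfEx]`. -/
theorem caut_restricts_itInfEx :
    IndexableFamily famCaut ∧
    (∃ M : List Datum →. ℕ, Partrec M ∧ Iterative M ∧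
        (∀ σ : List Datum, ConsistentSeq σ → (M σ).Dom) ∧
        ∀ L ∈ famCaut, ExLearns M L) ∧
    ¬ ItInfCautEx famCaut ∧
    {𝓛 : Set (Set ℕ) | ItInfCautEx 𝓛} ⊂ {𝓛 : Set (Set ℕ) | ItInfEx 𝓛} := by
  obtain ⟨M, hM, hit, htot, hlearn⟩ := exists_total_iterative_learner_famCaut
  have hEx : ItInfEx famCaut := ⟨M, hM, hit, hlearn⟩
  exact ⟨indexableFamily_famCaut, ⟨M, hM, hit, fun σ _ => htot σ, hlearn⟩,
    not_itInfCautEx_famCaut, fun _ => ItInfCautEx.itInfEx,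
    fun hsub => not_itInfCautEx_famCaut (hsub hEx)⟩
end
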